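/- Let t ∈ (0,1) be irrational. Then for infinitely many n ∈ ℕ and every z ∈ [0,1+t], all distinct words a, a' ∈ {1,2,3,4}^n satisfy |φ_a(z) − φ_{a'}(z)| ≥ 1/(8·4^n). -/

import Mathlib

/-- The four maps of the IFS `Φ_t`. -/
noncomputable def phiMap (t : ℝ) : Fin 4 → ℝ → ℝ :=
  ![fun x => x / 2, fun x => (x + 1) / 2, fun x => (x + t) / 2, fun x => (x + 1 + t) / 2]

/-- Composition of the IFS maps along a word, `φ_a = φ_{a_1} ∘ ⋯ ∘ φ_{a_n}`. -/
noncomputable def phiWord (t : ℝ) (a : List (Fin 4)) : ℝ → ℝ :=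
  a.foldr (fun i f => phiMap t i ∘ f) id

def dg (d : Fin 4 → ℕ) : List (Fin 4) → ℕ
  | [] => 0
  | i :: l => 2 ^ l.length * d i + dg d l

def dA : Fin 4 → ℕ := ![0, 1, 0, 1]
def dB : Fin 4 → ℕ := ![0, 0, 1, 1]

lemma phiMap_eq (t : ℝ) (i : Fin 4) (x : ℝ) : phiMap t i x = (x + dA i + t * dB i) / 2 := by
  fin_cases i <;> simp [phiMap, dA, dB]

lemma phiWord_eq (t z : ℝ) (l : List (Fin 4)) :
    phiWord t l z = (z + dg dA l + t * dg dB l) / 2 ^ l.length := by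
  induction l with
  | nil => simp [phiWord, dg]
  | cons i l ih =>
    have : phiWord t (i :: l) z = phiMap t i (phiWord t l z) := rfl
    rw [this, phiMap_eq, ih]
    simp only [dg, List.length_cons]
    push_cast
    field_simp
    ring

lemma dg_lt (d : Fin 4 → ℕ) (hd : ∀ i, d i ≤ 1) (l : List (Fin 4)) :
    dg d l < 2 ^ l.length := by
  induction l with
  | nil => simp [dg]
  | cons i l ih =>
    simp only [dg, List.length_cons, pow_succ]
    have := Nat.mul_le_mul_left (2 ^ l.length) (hd i)
    omega

lemma dA_le (i : Fin 4) : dA i ≤ 1 := by fin_cases i <;> simp [dA]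
lemma dB_le (i : Fin 4) : dB i ≤ 1 := by fin_cases i <;> simp [dB]

lemma d_inj (i j : Fin 4) (h : dA i = dA j) (h' : dB i = dB j) : i = j := by
  revert i j; decide

lemma dg_cons_inj (d : Fin 4 → ℕ) (hd : ∀ i, d i ≤ 1) (i j : Fin 4) (l m : List (Fin 4))
    (hl : l.length = m.length) (h : dg d (i :: l) = dg d (j :: m)) :
    d i = d j ∧ dg d l = dg d m := by
  have h1 := dg_lt d hd l
  have h2 := dg_lt d hd m
  simp only [dg] at h
  rw [hl] at h h1
  have hi := hd i
  have hj := hd j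
  interval_cases d i <;> interval_cases d j <;> simp at h ⊢ <;> omega

lemma dg_inj (l m : List (Fin 4)) (hl : l.length = m.length)
    (hA : dg dA l = dg dA m) (hB : dg dB l = dg dB m) : l = m := by
  induction l generalizing m with
  | nil => exact (List.length_eq_zero_iff.1 hl.symm).symm
  | cons i l ih =>
    cases m with
    | nil => simp at hl
    | cons j m =>
      have hl' : l.length = m.length := by simpa using hl
      obtain ⟨a1, a2⟩ := dg_cons_inj dA dA_le i j l m hl' hA
      obtain ⟨b1, b2⟩ := dg_cons_inj dB dB_le i j l m hl' hB
      rw [d_inj i j a1 b1, ih m hl' a2 b2]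

/-- Failure of the separation at level `n` yields a very good rational approximation. -/
lemma bad_level (t : ℝ) (n : ℕ) (z : ℝ) (a a' : Fin n → Fin 4) (hne : a ≠ a')
    (h : |phiWord t (List.ofFn a) z - phiWord t (List.ofFn a') z| < 1 / (8 * 4 ^ n)) :
    ∃ p q : ℤ, q ≠ 0 ∧ |(q : ℝ)| < 2 ^ n ∧ |q * t - p| * (8 * 2 ^ n) < 1 := by
  have hA := dg_lt dA dA_le (List.ofFn a)
  have hB := dg_lt dB dB_le (List.ofFn a)
  have hA' := dg_lt dA dA_le (List.ofFn a')
  have hB' := dg_lt dB dB_le (List.ofFn a')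
  have hinj := dg_inj (List.ofFn a) (List.ofFn a') (by simp)
  rw [phiWord_eq, phiWord_eq] at h
  simp only [List.length_ofFn] at *
  generalize dg dA (List.ofFn a) = A at *
  generalize dg dB (List.ofFn a) = B at *
  generalize dg dA (List.ofFn a') = A' at *
  generalize dg dB (List.ofFn a') = B' at *
  have h2 : (0:ℝ) < 2 ^ n := by positivity
  have h4 : (4:ℝ) ^ n = 2 ^ n * 2 ^ n := by rw [← mul_pow]; norm_num
  have key : |((B:ℝ) - B') * t - ((A':ℝ) - A)| * (8 * 2 ^ n) < 1 := by
    have e : (z + A + t * B) / 2 ^ n - (z + A' + t * B') / 2 ^ n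
        = (((B:ℝ) - B') * t - ((A':ℝ) - A)) / 2 ^ n := by
      field_simp
      ring
    rw [e, abs_div, abs_of_pos h2, h4, div_lt_div_iff₀ h2 (by positivity)] at h
    have : |((B:ℝ) - B') * t - ((A':ℝ) - A)| * (8 * 2 ^ n) * 2 ^ n < 1 * 2 ^ n := by linarith
    exact lt_of_mul_lt_mul_right this h2.le
  refine ⟨(A':ℤ) - A, (B:ℤ) - B', ?_, ?_, ?_⟩
  · intro hq
    have hBB : B = B' := by omega
    have hAA : A ≠ A' := fun e => hne (List.ofFn_injective (hinj e hBB))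
    have h1 : (1:ℝ) ≤ |(A':ℝ) - A| := by
      have : (1:ℤ) ≤ |(A':ℤ) - A| := Int.one_le_abs (by omega)
      exact_mod_cast this
    subst hBB
    rw [sub_self, zero_mul, zero_sub, abs_neg] at key
    have h3 : (1:ℝ) ≤ 2 ^ n := one_le_pow₀ (by norm_num)
    nlinarith
  · have : |(B:ℤ) - B'| < 2 ^ n := by
      have e1 : (B:ℤ) < 2 ^ n := by exact_mod_cast hB
      have e2 : (B':ℤ) < 2 ^ n := by exact_mod_cast hB'
      rw [abs_lt]; constructor <;> omega
    exact_mod_cast this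
  · push_cast
    exact key

lemma step_eq (t X : ℝ) (hX : 0 < X) (p q p' q' : ℤ) (h1 : |(q : ℝ)| < X)
    (h2 : |q * t - p| * (8 * X) < 1) (h1' : |(q' : ℝ)| < 2 * X)
    (h2' : |q' * t - p'| * (8 * (2 * X)) < 1) : p * q' = p' * q := by
  have e : ((p * q' - p' * q : ℤ) : ℝ) = q * (q' * t - p') - q' * (q * t - p) := by
    push_cast; ring
  have b1 : |(q:ℝ)| * |q' * t - p'| ≤ X * |q' * t - p'| := by gcongr
  have b2 : |(q':ℝ)| * |q * t - p| ≤ 2 * X * |q * t - p| := by gcongr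
  have : |((p * q' - p' * q : ℤ) : ℝ)| < 1 := by
    rw [e]
    refine (abs_sub _ _).trans_lt ?_
    rw [abs_mul, abs_mul]
    linarith
  have h : |p * q' - p' * q| < 1 := by exact_mod_cast this
  have := Int.abs_lt_one_iff.1 h
  omega

/-- For irrational `t ∈ (0,1)`, for infinitely many `n` the level-`n` images of every
`z ∈ [0,1+t]` are pairwise at distance at least `1/(8·4^n)`. -/
theorem infinitely_many_good_levels (t : ℝ) (ht : Irrational t)
    (ht01 : t ∈ Set.Ioo (0:ℝ) 1) :
    {n : ℕ | ∀ z ∈ Set.Icc (0:ℝ) (1 + t), ∀ a a' : Fin n → Fin 4, a ≠ a' →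
      1 / (8 * 4 ^ n) ≤
        |phiWord t (List.ofFn a) z - phiWord t (List.ofFn a') z|}.Infinite := by
  by_contra hfin
  rw [Set.not_infinite] at hfin
  obtain ⟨N, hN⟩ := hfin.bddAbove
  have hbad : ∀ k : ℕ, ∃ p q : ℤ, q ≠ 0 ∧ |(q : ℝ)| < 2 ^ (N + 1 + k) ∧
      |q * t - p| * (8 * 2 ^ (N + 1 + k)) < 1 := by
    intro k
    by_contra hc
    have : N + 1 + k ≤ N := by
      apply hN
      intro z _ a a' hne
      by_contra hlt
      exact hc (bad_level t _ z a a' hne (not_le.1 hlt))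
    omega
  choose p q hq hqb hp using hbad
  have hstep : ∀ k, p k * q (k + 1) = p (k + 1) * q k := by
    intro k
    have e : (2:ℝ) ^ (N + 1 + (k + 1)) = 2 * 2 ^ (N + 1 + k) := by ring
    have h1 := hqb (k + 1)
    have h2 := hp (k + 1)
    rw [e] at h1 h2
    exact step_eq t _ (by positivity) _ _ _ _ (hqb k) (hp k) h1 h2
  have hall : ∀ k, p 0 * q k = p k * q 0 := by
    intro k
    induction k with
    | zero => rfl
    | succ k ih =>
      apply mul_right_cancel₀ (hq k)
      linear_combination q (k + 1) * ih + q 0 * hstep k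
  have hne : (q 0 : ℝ) * t - p 0 ≠ 0 := by
    intro h0
    have hq0 : (q 0 : ℝ) ≠ 0 := by exact_mod_cast hq 0
    apply ht
    refine ⟨(p 0 : ℚ) / q 0, ?_⟩
    push_cast
    field_simp
    linarith
  have hd : 0 < |(q 0 : ℝ) * t - p 0| := abs_pos.2 hne
  obtain ⟨k, hk⟩ := pow_unbounded_of_one_lt (|(q 0 : ℝ)| / |(q 0 : ℝ) * t - p 0|)
    (one_lt_two : (1:ℝ) < 2)
  rw [div_lt_iff₀ hd] at hk
  have e : |(q k : ℝ)| * |(q 0 : ℝ) * t - p 0| = |(q 0 : ℝ)| * |(q k : ℝ) * t - p k| := by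
    rw [← abs_mul, ← abs_mul]
    congr 1
    have : (p 0 : ℝ) * q k = p k * q 0 := by exact_mod_cast hall k
    linear_combination -this
  have hqk : (1:ℝ) ≤ |(q k : ℝ)| := by exact_mod_cast Int.one_le_abs (hq k)
  have hle : (2:ℝ) ^ k ≤ 8 * 2 ^ (N + 1 + k) := by
    have : (2:ℝ) ^ k ≤ 2 ^ (N + 1 + k) := pow_le_pow_right₀ (by norm_num) (by omega)
    have : (0:ℝ) < 2 ^ k := by positivity
    linarith
  have h1 : |(q k : ℝ) * t - p k| * 2 ^ k ≤ 1 :=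
    (mul_le_mul_of_nonneg_left hle (abs_nonneg _)).trans (hp k).le
  have h2 : |(q 0 : ℝ) * t - p 0| ≤ |(q 0 : ℝ)| * |(q k : ℝ) * t - p k| := by
    rw [← e]; exact le_mul_of_one_le_left hd.le hqk
  have h3 : (2:ℝ) ^ k * |(q 0 : ℝ) * t - p 0| ≤ |(q 0 : ℝ)| := by
    calc (2:ℝ) ^ k * |(q 0 : ℝ) * t - p 0|
        ≤ 2 ^ k * (|(q 0 : ℝ)| * |(q k : ℝ) * t - p k|) := by gcongr
      _ = |(q 0 : ℝ)| * (|(q k : ℝ) * t - p k| * 2 ^ k) := by ring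
      _ ≤ |(q 0 : ℝ)| * 1 := by gcongr
      _ = |(q 0 : ℝ)| := mul_one _
  linarith
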